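/- Let u be a single positive integer. A word w lies in C(u) if and only if every column of the RSK insertion tableau P(w) contains an entry equal to u. -/

import Mathlib

namespace Plactic

/-- Insert `x` into a weakly increasing row, returning the new row and the bumped entry. -/
def rowInsert (x : ℕ) : List ℕ → List ℕ × Option ℕ
  | [] => ([x], none)
  | y :: ys =>
    if x < y then (x :: ys, some y)
    else
      let p := rowInsert x ys
      (y :: p.1, p.2)

/-- RSK insertion of `x` into a tableau given as a list of rows. -/
def tInsert (x : ℕ) : List (List ℕ) → List (List ℕ)
  | [] => [[x]]
  | r :: rs =>
    match rowInsert x r with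
    | (r', none) => r' :: rs
    | (r', some y) => r' :: tInsert y rs

/-- The RSK insertion tableau of a word. -/
def P (w : List ℕ) : List (List ℕ) := w.foldl (fun t x => tInsert x t) []

/-- The `i`-th row (0-indexed) of the insertion tableau of `w`. -/
def row (w : List ℕ) (i : ℕ) : List ℕ := (P w).getD i []

/-- The `j`-th column (0-indexed) of a tableau, read top to bottom. -/
def col (T : List (List ℕ)) (j : ℕ) : List ℕ := T.filterMap (fun r => r[j]?)

/-- An elementary Knuth transposition. -/
inductive KStep : List ℕ → List ℕ → Prop
  | k1 (x y : List ℕ) (a b c : ℕ) : a ≤ b → b < c →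
      KStep (x ++ [a, c, b] ++ y) (x ++ [c, a, b] ++ y)
  | k2 (x y : List ℕ) (a b c : ℕ) : a < b → b ≤ c →
      KStep (x ++ [b, a, c] ++ y) (x ++ [b, c, a] ++ y)

/-- Knuth equivalence: the equivalence relation generated by Knuth transpositions. -/
def KEquiv : List ℕ → List ℕ → Prop := Relation.EqvGen KStep

/-- The centralizer of `u` in the plactic monoid. -/
def Cent (u : List ℕ) : Set (List ℕ) := {w | KEquiv (u ++ w) (w ++ u)}

namespace KEquiv

theorem refl (x : List ℕ) : KEquiv x x := Relation.EqvGen.refl x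

theorem symm {x y : List ℕ} (h : KEquiv x y) : KEquiv y x := Relation.EqvGen.symm _ _ h

theorem trans {x y z : List ℕ} (h : KEquiv x y) (h' : KEquiv y z) : KEquiv x z :=
  Relation.EqvGen.trans _ _ _ h h'

theorem append_both {x y : List ℕ} (h : KEquiv x y) (l r : List ℕ) :
    KEquiv (l ++ x ++ r) (l ++ y ++ r) := by
  induction h with
  | rel x y h =>
    apply Relation.EqvGen.rel
    cases h with
    | k1 x y a b c h h' => simpa using KStep.k1 (l ++ x) (y ++ r) a b c h h'
    | k2 x y a b c h h' => simpa using KStep.k2 (l ++ x) (y ++ r) a b c h h'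
  | refl x => exact refl _
  | symm x y _ ih => exact ih.symm
  | trans x y z _ _ hxy hyz => exact hxy.trans hyz

theorem append_left {x y : List ℕ} (h : KEquiv x y) (l : List ℕ) : KEquiv (l ++ x) (l ++ y) := by
  simpa using h.append_both l []

theorem append_right {x y : List ℕ} (h : KEquiv x y) (r : List ℕ) :
    KEquiv (x ++ r) (y ++ r) := by
  simpa using h.append_both [] r

theorem cons {x y : List ℕ} (h : KEquiv x y) (a : ℕ) : KEquiv (a :: x) (a :: y) :=
  h.append_left [a]

theorem perm {x y : List ℕ} (h : KEquiv x y) : x.Perm y := by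
  induction h with
  | rel x y h =>
    cases h with
    | k1 x y a b c =>
      exact ((List.Perm.swap c a [b]).append_left x).append_right y
    | k2 x y a b c =>
      exact (((List.Perm.swap c a []).cons b).append_left x).append_right y
  | refl x => exact List.Perm.refl x
  | symm x y _ ih => exact ih.symm
  | trans x y z _ _ hxy hyz => exact hxy.trans hyz

/-- The first Knuth relation at the front of a word. -/
theorem swap_before {a b c : ℕ} (h : a ≤ b) (hbc : b < c) (y : List ℕ) :
    KEquiv (a :: c :: b :: y) (c :: a :: b :: y) :=
  Relation.EqvGen.rel _ _ (KStep.k1 [] y a b c h hbc)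

/-- The second Knuth relation at the front of a word. -/
theorem swap_after {a b c : ℕ} (h : a < b) (hbc : b ≤ c) (y : List ℕ) :
    KEquiv (b :: a :: c :: y) (b :: c :: a :: y) :=
  Relation.EqvGen.rel _ _ (KStep.k2 [] y a b c h hbc)

/-- A letter smaller than a row moves left across all of the row but its first entry. -/
theorem row_append_small (R : List ℕ) (a b : ℕ) (hR : (b :: R).Pairwise (· ≤ ·)) (h : a < b) :
    KEquiv (b :: (R ++ [a])) (b :: a :: R) := by
  induction R generalizing b with
  | nil => exact refl _
  | cons r R ih =>
    have hbr : b ≤ r := by simp at hR; omega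
    exact ((ih r hR.of_cons (by omega)).cons b).trans (swap_after h hbr R).symm

/-- A letter larger than a row moves left across all of the row but its last entry. -/
theorem row_large_last (A : List ℕ) (x y : ℕ) (hA : (A ++ [x]).Pairwise (· ≤ ·)) (h : x < y) :
    KEquiv (A ++ [y, x]) (y :: (A ++ [x])) := by
  induction A with
  | nil => exact refl _
  | cons z A ih =>
    refine ((ih hA.of_cons).cons z).trans ?_
    cases A with
    | nil => exact swap_before (by simpa using hA) h []
    | cons t A =>
      have : z ≤ t ∧ t ≤ x := by
        simp only [List.cons_append, List.pairwise_cons] at hA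
        exact ⟨hA.1 t (by simp), hA.2.1 x (by simp)⟩
      exact swap_before this.1 (by omega) _

/-- A sequence of smaller and smaller letters moves left across all of a row but its first entry. -/
theorem row_append_column (C R : List ℕ) (b : ℕ) (hR : (b :: R).Pairwise (· ≤ ·))
    (hC : (b :: C).Pairwise (· > ·)) : KEquiv (b :: (R ++ C)) (b :: (C ++ R)) := by
  induction C generalizing b with
  | nil => simpa using refl _
  | cons c C ih =>
    have hcb : c < b := by simp at hC; omega
    have h1 : KEquiv (b :: (R ++ c :: C)) (b :: c :: (R ++ C)) := by
      simpa using (row_append_small R c b hR hcb).append_right C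
    refine h1.trans ((ih c ?_ hC.of_cons).cons b)
    refine List.pairwise_cons.2 ⟨fun r hr => ?_, hR.of_cons⟩
    have := (List.pairwise_cons.1 hR).1 r hr
    omega

/-- A letter `u` moves right across a strictly decreasing word of letters greater than `u`,
if this word is followed by another `u`. -/
theorem column_above (X : List ℕ) (u : ℕ) (hX : (X ++ [u]).Pairwise (· > ·)) :
    KEquiv (u :: (X ++ [u])) (X ++ [u, u]) := by
  induction X with
  | nil => exact refl _
  | cons x X ih =>
    refine trans ?_ ((ih hX.of_cons).cons x)
    cases X with
    | nil => exact swap_before le_rfl (by simpa using hX) []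
    | cons t X =>
      have : t < x ∧ u < t := by
        simp only [List.cons_append, List.pairwise_cons] at hX
        exact ⟨hX.1 t (by simp), hX.2.1 u (by simp)⟩
      exact swap_before this.2.le this.1 _

/-- A letter `u` moves right across a strictly decreasing word whose letters are less than
the letter preceding `u`, if this letter is at most `u`. -/
theorem column_below (Y : List ℕ) (b u : ℕ) (hY : (b :: Y).Pairwise (· > ·)) (hb : b ≤ u) :
    KEquiv (b :: u :: Y) (b :: (Y ++ [u])) := by
  induction Y generalizing b with
  | nil => exact refl _
  | cons y Y ih =>
    have hy : y < b := by simp at hY; omega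
    exact (swap_after hy hb Y).symm.trans ((ih y hY.of_cons (by omega)).cons b)

/-- A letter commutes with every column that contains it. -/
theorem column_comm (C : List ℕ) (u : ℕ) (hC : C.Pairwise (· > ·)) (hu : u ∈ C) :
    KEquiv (u :: C) (C ++ [u]) := by
  obtain ⟨X, Y, rfl⟩ := List.append_of_mem hu
  have h1 : KEquiv (u :: (X ++ u :: Y)) (X ++ u :: u :: Y) := by
    have hX : (X ++ [u]).Pairwise (· > ·) := hC.sublist (by simp)
    simpa using (column_above X u hX).append_right Y
  have h2 := (column_below Y u u (hC.sublist (by simp)) le_rfl).append_left X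
  simpa using h1.trans h2

end KEquiv

/-- `Dom r s`: the row `s` may be placed directly below the row `r` in a tableau. -/
def Dom : List ℕ → List ℕ → Prop
  | _, [] => True
  | [], _ :: _ => False
  | x :: xs, y :: ys => x < y ∧ Dom xs ys

theorem Dom.exists_getElem? {r s : List ℕ} (h : Dom r s) {j y : ℕ} (hy : s[j]? = some y) :
    ∃ x, r[j]? = some x ∧ x < y := by
  induction r, s using Dom.induct generalizing j with
  | case1 => simp at hy
  | case2 => exact h.elim
  | case3 a as b bs ih =>
    cases j with
    | zero =>
      obtain rfl : b = y := by simpa using hy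
      exact ⟨a, by simp, h.1⟩
    | succ j => simpa using ih h.2 (by simpa using hy)

theorem Dom.trans {r s t : List ℕ} (h : Dom r s) (h' : Dom s t) : Dom r t := by
  induction r, s using Dom.induct generalizing t with
  | case1 => cases t <;> simp_all [Dom]
  | case2 => exact h.elim
  | case3 a as b bs ih =>
    cases t with
    | nil => simp [Dom]
    | cons c cs => exact ⟨h.1.trans h'.1, ih h.2 h'.2⟩

theorem Dom.tail {r s : List ℕ} (h : Dom r s) : Dom r.tail s.tail := by
  cases s with
  | nil => simp [Dom]
  | cons b bs =>
    cases r with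
    | nil => exact h.elim
    | cons a as => exact h.2

theorem Dom.append_singleton {r s : List ℕ} (h : Dom r s) (x : ℕ) : Dom (r ++ [x]) s := by
  induction r, s using Dom.induct with
  | case1 => simp [Dom]
  | case2 => exact h.elim
  | case3 a as b bs ih => exact ⟨h.1, ih h.2⟩

theorem rowInsert_eq_none {x : ℕ} {r : List ℕ} (h : (rowInsert x r).2 = none) :
    (rowInsert x r).1 = r ++ [x] ∧ ∀ z ∈ r, z ≤ x := by
  induction r with
  | nil => simp [rowInsert]
  | cons z zs ih =>
    by_cases hz : x < z
    · simp [rowInsert, hz] at h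
    · simp only [rowInsert, hz, if_false] at h ⊢
      have := ih h
      simp_all

theorem rowInsert_eq_some {x y : ℕ} {r : List ℕ} (h : (rowInsert x r).2 = some y) :
    ∃ a b, r = a ++ y :: b ∧ (rowInsert x r).1 = a ++ x :: b ∧ (∀ z ∈ a, z ≤ x) ∧ x < y := by
  induction r with
  | nil => simp [rowInsert] at h
  | cons z zs ih =>
    by_cases hz : x < z
    · refine ⟨[], zs, ?_⟩
      simp_all [rowInsert]
    · simp only [rowInsert, hz, if_false] at h ⊢
      obtain ⟨a, b, h1, h2, h3, h4⟩ := ih h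
      exact ⟨z :: a, b, by simp [h1], by simp [h2], by simpa using ⟨by omega, h3⟩, h4⟩

theorem pairwise_rowInsert (x : ℕ) {r : List ℕ} (hr : r.Pairwise (· ≤ ·)) :
    (rowInsert x r).1.Pairwise (· ≤ ·) := by
  cases h : (rowInsert x r).2 with
  | none =>
    obtain ⟨h1, h2⟩ := rowInsert_eq_none h
    rw [h1, List.pairwise_append]
    simpa [hr] using h2
  | some y =>
    obtain ⟨a, b, rfl, h2, h3, h4⟩ := rowInsert_eq_some h
    rw [h2]
    simp only [List.pairwise_append, List.pairwise_cons, List.mem_cons] at hr ⊢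
    refine ⟨hr.1, ⟨fun z hz => h4.le.trans (hr.2.1.1 z hz), hr.2.1.2⟩, ?_⟩
    rintro z hz t (rfl | ht)
    · exact h3 z hz
    · exact hr.2.2 z hz t (Or.inr ht)

theorem dom_rowInsert_left {x y : ℕ} {r s : List ℕ} (h : (rowInsert x r).2 = some y)
    (hd : Dom r s) : Dom (rowInsert x r).1 s := by
  induction r, s using Dom.induct with
  | case1 => simp [Dom]
  | case2 => exact hd.elim
  | case3 a as b bs ih =>
    by_cases ha : x < a
    · simpa [rowInsert, ha] using ⟨ha.trans hd.1, hd.2⟩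
    · simp only [rowInsert, ha, if_false] at h ⊢
      exact ⟨hd.1, ih h hd.2⟩

theorem dom_rowInsert {x y : ℕ} {r s : List ℕ} (h : (rowInsert x r).2 = some y)
    (hd : Dom r s) : Dom (rowInsert x r).1 (rowInsert y s).1 := by
  have hxy : x < y := by
    obtain ⟨a, b, _, _, _, h4⟩ := rowInsert_eq_some h
    exact h4
  induction r generalizing s with
  | nil => simp [rowInsert] at h
  | cons z zs ih =>
    by_cases hz : x < z
    · obtain rfl : z = y := by simpa [rowInsert, hz] using h
      cases s with
      | nil => simp [rowInsert, hz, Dom]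
      | cons t ts => simpa [rowInsert, hz, hd.1, Dom] using hd.2
    · simp only [rowInsert, hz, if_false] at h ⊢
      cases s with
      | nil => exact ⟨by omega, by simp [Dom]⟩
      | cons t ts =>
        by_cases hy : y < t
        · simp only [rowInsert, hy, if_true]
          exact ⟨by omega, dom_rowInsert_left h hd.2⟩
        · simp only [rowInsert, hy, if_false]
          exact ⟨hd.1, ih h hd.2⟩

/-- Semistandard tableaux as lists of rows, where empty rows at the bottom are allowed. -/
def IsTableau : List (List ℕ) → Prop
  | [] => True
  | r :: rs => r.Pairwise (· ≤ ·) ∧ Dom r (rs.headD []) ∧ IsTableau rs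

theorem headD_tInsert (x : ℕ) (T : List (List ℕ)) :
    (tInsert x T).headD [] = (rowInsert x (T.headD [])).1 := by
  cases T with
  | nil => simp [tInsert, rowInsert]
  | cons r rs =>
    rw [tInsert]
    split <;> simp_all

theorem IsTableau.tInsert {T : List (List ℕ)} (hT : IsTableau T) (x : ℕ) :
    IsTableau (tInsert x T) := by
  induction T generalizing x with
  | nil => simp [Plactic.tInsert, IsTableau, Dom]
  | cons r rs ih =>
    obtain ⟨h1, h2, h3⟩ := hT
    have hp := pairwise_rowInsert x h1
    rw [Plactic.tInsert]
    split
    · next r' h =>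
      have := (rowInsert_eq_none (x := x) (r := r) (by rw [h])).1
      rw [h] at hp this
      obtain rfl : r' = r ++ [x] := this
      exact ⟨hp, h2.append_singleton x, h3⟩
    · next s y h =>
      have hd := dom_rowInsert (x := x) (r := r) (y := y) (by rw [h]) h2
      rw [h] at hp hd
      exact ⟨hp, by rwa [headD_tInsert], ih h3 y⟩

theorem isTableau_P (w : List ℕ) : IsTableau (P w) := by
  induction w using List.reverseRecOn with
  | nil => trivial
  | append_singleton w x ih => simpa [P] using ih.tInsert x

/-- The row reading word of a tableau. -/
def rowWord (T : List (List ℕ)) : List ℕ := T.reverse.flatten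

theorem rowWord_cons (r : List ℕ) (T : List (List ℕ)) : rowWord (r :: T) = rowWord T ++ r := by
  simp [rowWord]

theorem KEquiv.rowInsert {x y : ℕ} {r : List ℕ} (hr : r.Pairwise (· ≤ ·))
    (h : (rowInsert x r).2 = some y) : KEquiv (r ++ [x]) (y :: (rowInsert x r).1) := by
  have hp := pairwise_rowInsert x hr
  obtain ⟨a, b, rfl, h2, h3, h4⟩ := rowInsert_eq_some h
  rw [h2] at hp ⊢
  have e1 := (row_append_small b x y (hr.sublist (by simp)) h4).append_left a
  have e2 := (row_large_last a x y (hp.sublist (by simp)) h4).append_right b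
  simpa using e1.trans (by simpa using e2)

theorem KEquiv.tInsert {T : List (List ℕ)} (hT : IsTableau T) (x : ℕ) :
    KEquiv (rowWord T ++ [x]) (rowWord (tInsert x T)) := by
  induction T generalizing x with
  | nil => exact refl _
  | cons r rs ih =>
    rw [Plactic.tInsert]
    split
    · next r' h =>
      have := (rowInsert_eq_none (x := x) (r := r) (by rw [h])).1
      rw [h] at this
      obtain rfl : r' = r ++ [x] := this
      simpa [rowWord_cons] using refl _
    · next s y h =>
      have e := (KEquiv.rowInsert (x := x) (y := y) hT.1 (by rw [h])).append_left (rowWord rs)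
      rw [h] at e
      simpa [rowWord_cons] using e.trans (by simpa using (ih hT.2.2 y).append_right s)

/-- Every word is Knuth-equivalent to the row reading word of its insertion tableau. -/
theorem kEquiv_rowWord_P (w : List ℕ) : KEquiv w (rowWord (P w)) := by
  induction w using List.reverseRecOn with
  | nil => exact KEquiv.refl _
  | append_singleton w x ih =>
    simpa [P] using (ih.append_right [x]).trans (KEquiv.tInsert (isTableau_P w) x)

theorem IsTableau.pairwise_dom {T : List (List ℕ)} (hT : IsTableau T) : T.Pairwise Dom := by
  induction T with
  | nil => exact List.Pairwise.nil
  | cons r rs ih =>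
    have hp := ih hT.2.2
    refine List.pairwise_cons.2 ⟨?_, hp⟩
    have h2 := hT.2.1
    cases rs with
    | nil => simp
    | cons s ss =>
      rintro t (_ | ⟨_, ht⟩)
      · exact h2
      · exact h2.trans ((List.pairwise_cons.1 hp).1 t ht)

theorem IsTableau.pairwise_col {T : List (List ℕ)} (hT : IsTableau T) (j : ℕ) :
    (col T j).Pairwise (· < ·) := by
  rw [col, List.pairwise_filterMap]
  refine hT.pairwise_dom.imp fun {r s} h x hx y hy => ?_
  obtain ⟨z, hz, hzy⟩ := h.exists_getElem? hy
  obtain rfl : z = x := by simpa [hz] using hx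
  exact hzy

theorem IsTableau.pairwise_row {T : List (List ℕ)} (hT : IsTableau T) :
    ∀ r ∈ T, r.Pairwise (· ≤ ·) := by
  induction T with
  | nil => simp
  | cons r rs ih => simpa using ⟨hT.1, ih hT.2.2⟩

theorem IsTableau.map_tail {T : List (List ℕ)} (hT : IsTableau T) :
    IsTableau (T.map List.tail) := by
  induction T with
  | nil => trivial
  | cons r rs ih =>
    refine ⟨hT.1.tail, ?_, ih hT.2.2⟩
    have := hT.2.1.tail
    cases rs <;> simpa using this

theorem col_map_tail (T : List (List ℕ)) (j : ℕ) : col (T.map List.tail) j = col T (j + 1) := by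
  simp [col, List.filterMap_map]

/-- The first column of a tableau can be split off from the row reading word. -/
theorem kEquiv_col_append {T : List (List ℕ)} (hr : ∀ r ∈ T, r.Pairwise (· ≤ ·))
    (hc : (col T 0).Pairwise (· < ·)) :
    KEquiv (rowWord T) ((col T 0).reverse ++ rowWord (T.map List.tail)) := by
  induction T using List.reverseRecOn with
  | nil => exact KEquiv.refl _
  | append_singleton T r ih =>
    have hcol : col (T ++ [r]) 0 = col T 0 ++ col [r] 0 := by simp [col]
    rw [hcol] at hc ⊢
    have e := (ih (fun s hs => hr s (by simp [hs])) (hc.sublist (by simp))).append_left r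
    have hw : rowWord (T ++ [r]) = r ++ rowWord T := by simp [rowWord]
    have hw' : rowWord ((T ++ [r]).map List.tail) = r.tail ++ rowWord (T.map List.tail) := by
      simp [rowWord]
    rw [hw, hw']
    refine e.trans ?_
    cases r with
    | nil => simpa [col] using KEquiv.refl _
    | cons b R =>
      have hb : (b :: (col T 0).reverse).Pairwise (· > ·) := by
        rw [List.pairwise_append] at hc
        simpa [List.pairwise_reverse, hc.1] using fun a ha => hc.2.2 a ha b (by simp [col])
      have e' := KEquiv.row_append_column (col T 0).reverse R b (hr _ (by simp)) hb
      simpa [col] using e'.append_right (rowWord (T.map List.tail))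

theorem IsTableau.kEquiv_col_append {T : List (List ℕ)} (hT : IsTableau T) :
    KEquiv (rowWord T) ((col T 0).reverse ++ rowWord (T.map List.tail)) :=
  Plactic.kEquiv_col_append hT.pairwise_row (hT.pairwise_col 0)

theorem IsTableau.rowWord_eq_nil {T : List (List ℕ)} (hT : IsTableau T) (h : T.headD [] = []) :
    rowWord T = [] := by
  induction T with
  | nil => rfl
  | cons r rs ih =>
    obtain rfl : r = [] := h
    have h2 := hT.2.1
    have : rs.headD [] = [] := by
      cases hs : rs.headD [] with
      | nil => rfl
      | cons a l => rw [hs] at h2; exact h2.elim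
    simp [rowWord_cons, ih hT.2.2 this]

theorem length_headD_map_tail {T : List (List ℕ)} {n : ℕ} (hn : (T.headD []).length = n + 1) :
    ((T.map List.tail).headD []).length = n := by
  cases T <;> simp_all

/-- A letter contained in every column of a tableau commutes with its row reading word. -/
theorem IsTableau.rowWord_comm {T : List (List ℕ)} (hT : IsTableau T) {u : ℕ}
    (hu : ∀ j < (T.headD []).length, u ∈ col T j) :
    KEquiv (u :: rowWord T) (rowWord T ++ [u]) := by
  induction hn : (T.headD []).length generalizing T with
  | zero => simpa [hT.rowWord_eq_nil (List.length_eq_zero_iff.1 hn)] using KEquiv.refl _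
  | succ n ih =>
    have hn' := length_headD_map_tail hn
    have e := hT.kEquiv_col_append
    have e1 := KEquiv.column_comm (col T 0).reverse u
      (List.pairwise_reverse.2 (hT.pairwise_col 0)) (by simpa using hu 0 (by omega))
    have e2 := ih hT.map_tail
      (fun j hj => by rw [col_map_tail]; exact hu (j + 1) (by omega)) hn'
    have e3 := e2.append_left (col T 0).reverse
    have e4 := e1.append_right (rowWord (T.map List.tail))
    refine (e.cons u).trans (KEquiv.trans (by simpa using e4) ?_)
    exact KEquiv.trans (by simpa using e3) (by simpa using (e.append_right [u]).symm)

/-- A letter occurs at most once per column of a tableau; if it occurs as often as there are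
columns, then it occurs in every column. -/
theorem IsTableau.count_le {T : List (List ℕ)} (hT : IsTableau T) (u : ℕ) :
    (rowWord T).count u ≤ (T.headD []).length ∧
      ((T.headD []).length ≤ (rowWord T).count u →
        ∀ j < (T.headD []).length, u ∈ col T j) := by
  induction hn : (T.headD []).length generalizing T with
  | zero => simp [hT.rowWord_eq_nil (List.length_eq_zero_iff.1 hn)]
  | succ n ih =>
    obtain ⟨h1, h2⟩ := ih hT.map_tail (length_headD_map_tail hn)
    have hc := hT.kEquiv_col_append.perm.count_eq u
    rw [List.count_append, List.count_reverse] at hc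
    have hcol := List.nodup_iff_count_le_one.1 (List.Pairwise.imp ne_of_lt (hT.pairwise_col 0)) u
    refine ⟨by omega, fun h j hj => ?_⟩
    cases j with
    | zero => exact List.count_pos_iff.1 (by omega)
    | succ j =>
      rw [← col_map_tail]
      exact h2 (by omega) j (by omega)

/-- `w` has a weakly increasing subsequence of length `k` with entries in `S`. -/
def HasInc (S : Set ℕ) (k : ℕ) (w : List ℕ) : Prop :=
  ∃ s : List ℕ, s.Sublist w ∧ s.Pairwise (· ≤ ·) ∧ (∀ x ∈ s, x ∈ S) ∧ s.length = k

theorem HasInc.length_le {S : Set ℕ} {k : ℕ} {w : List ℕ} (h : HasInc S k w) : k ≤ w.length := by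
  obtain ⟨s, hs, _, _, rfl⟩ := h
  exact hs.length_le

/-- Replacing a factor `m` of a word by `m'` preserves `HasInc`, provided that each weakly
increasing subsequence of `m` can be replaced by one of `m'` with the same length and bounds. -/
theorem HasInc.replace {S : Set ℕ} {k : ℕ} {x y m m' : List ℕ}
    (hm : ∀ s : List ℕ, s.Sublist m → s.Pairwise (· ≤ ·) → (∀ t ∈ s, t ∈ S) →
      ∃ s' : List ℕ, s'.Sublist m' ∧ s'.Pairwise (· ≤ ·) ∧ s'.length = s.length ∧
        (∀ t ∈ s', ∃ p ∈ s, ∃ q ∈ s, p ≤ t ∧ t ≤ q) ∧ ∀ t ∈ s', t ∈ S)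
    (h : HasInc S k (x ++ m ++ y)) : HasInc S k (x ++ m' ++ y) := by
  obtain ⟨s, hs, hp, hS, rfl⟩ := h
  obtain ⟨s12, s3, rfl, h12, h3⟩ := List.sublist_append_iff.1 hs
  obtain ⟨s1, s2, rfl, h1, h2⟩ := List.sublist_append_iff.1 h12
  simp only [List.pairwise_append, List.mem_append] at hp hS
  obtain ⟨s', g1, g2, g3, g4, g5⟩ := hm s2 h2 hp.1.2.1 (fun t ht => hS t (by simp [ht]))
  refine ⟨s1 ++ s' ++ s3, (h1.append g1).append h3, ?_, ?_, by simp [g3]⟩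
  · simp only [List.pairwise_append, List.mem_append]
    refine ⟨⟨hp.1.1, g2, fun a ha b hb => ?_⟩, hp.2.1, ?_⟩
    · obtain ⟨p, hp', _, _, hpt, _⟩ := g4 b hb
      exact (hp.1.2.2 a ha p hp').trans hpt
    · rintro a (ha | ha) b hb
      · exact hp.2.2 a (Or.inl ha) b hb
      · obtain ⟨_, _, q, hq, _, htq⟩ := g4 a ha
        exact htq.trans (hp.2.2 q (Or.inr hq) b hb)
  · simp only [List.mem_append]
    rintro t ((ht | ht) | ht)
    · exact hS t (by simp [ht])
    · exact g5 t ht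
    · exact hS t (by simp [ht])

theorem KStep.hasInc_iff {S : Set ℕ} (hS : S.OrdConnected) {x y : List ℕ} (h : KStep x y) (k : ℕ) :
    HasInc S k x ↔ HasInc S k y := by
  have keep : ∀ {m' s : List ℕ}, s.Pairwise (· ≤ ·) → (∀ t ∈ s, t ∈ S) → s.Sublist m' →
      ∃ s' : List ℕ, s'.Sublist m' ∧ s'.Pairwise (· ≤ ·) ∧ s'.length = s.length ∧
        (∀ t ∈ s', ∃ p ∈ s, ∃ q ∈ s, p ≤ t ∧ t ≤ q) ∧ ∀ t ∈ s', t ∈ S :=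
    fun {m' s} hp hs hm => ⟨s, hm, hp, rfl, fun t ht => ⟨t, ht, t, ht, le_rfl, le_rfl⟩, hs⟩
  cases h with
  | k1 x y a b c hab hbc =>
    constructor <;> refine HasInc.replace fun s hs hp hsS => ?_
    · by_cases hac : s = [a, c]
      · subst hac
        have hb : b ∈ S := hS.out (hsS a (by simp)) (hsS c (by simp)) ⟨hab, hbc.le⟩
        refine ⟨[a, b], by simp, by simpa using hab, rfl, ?_, ?_⟩
        · simp; omega
        · simpa using ⟨hsS a (by simp), hb⟩
      · refine keep hp hsS ?_
        rw [← List.mem_sublists] at hs ⊢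
        simp [List.sublists] at hs ⊢
        rcases hs with rfl | rfl | rfl | rfl | rfl | rfl | rfl | rfl <;> simp_all <;> omega
    · refine keep hp hsS ?_
      rw [← List.mem_sublists] at hs ⊢
      simp [List.sublists] at hs ⊢
      rcases hs with rfl | rfl | rfl | rfl | rfl | rfl | rfl | rfl <;> simp_all <;> omega
  | k2 x y a b c hab hbc =>
    constructor <;> refine HasInc.replace fun s hs hp hsS => ?_
    · by_cases hac : s = [a, c]
      · subst hac
        have hb : b ∈ S := hS.out (hsS a (by simp)) (hsS c (by simp)) ⟨hab.le, hbc⟩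
        refine ⟨[b, c], by simp, by simpa using hbc, rfl, ?_, ?_⟩
        · simp; omega
        · simpa using ⟨hb, hsS c (by simp)⟩
      · refine keep hp hsS ?_
        rw [← List.mem_sublists] at hs ⊢
        simp [List.sublists] at hs ⊢
        rcases hs with rfl | rfl | rfl | rfl | rfl | rfl | rfl | rfl <;> simp_all <;> omega
    · refine keep hp hsS ?_
      rw [← List.mem_sublists] at hs ⊢
      simp [List.sublists] at hs ⊢
      rcases hs with rfl | rfl | rfl | rfl | rfl | rfl | rfl | rfl <;> simp_all <;> omega

theorem KEquiv.hasInc_iff {S : Set ℕ} (hS : S.OrdConnected) {x y : List ℕ} (h : KEquiv x y)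
    (k : ℕ) : HasInc S k x ↔ HasInc S k y := by
  induction h with
  | rel x y h => exact h.hasInc_iff hS k
  | refl x => exact Iff.rfl
  | symm x y _ ih => exact ih.symm
  | trans x y z _ _ hxy hyz => exact hxy.trans hyz

theorem HasInc.le_of_step {S : Set ℕ} {w : List ℕ} {m k : ℕ} (h : HasInc S k w)
    (hstep : ∀ k, HasInc S k w → k ≤ m ∨ HasInc S (k + 1) w) : k ≤ m := by
  by_contra! hk
  have hall : ∀ n, HasInc S (k + n) w := by
    intro n
    induction n with
    | zero => exact h
    | succ n ih => exact (hstep _ ih).resolve_left (by omega)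
  have := (hall (w.length + 1)).length_le
  omega

theorem length_le_count_of_sublist {s w : List ℕ} {u : ℕ} (h : s.Sublist w) (hs : ∀ x ∈ s, x = u) :
    s.length ≤ w.count u := by
  rw [← List.count_eq_length.2 fun x hx => (hs x hx).symm]
  exact h.count_le u

/-- If `u` commutes with `w`, then the increasing subsequences of `w` with entries at most `u`
are not longer than the number of occurrences of `u`. -/
theorem HasInc.le_count_of_comm_Iic {u k : ℕ} {w : List ℕ} (hw : KEquiv (u :: w) (w ++ [u]))
    (h : HasInc (Set.Iic u) k w) : k ≤ w.count u := by
  refine h.le_of_step fun k ⟨s, h1, h2, h3, h4⟩ => ?_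
  have hlast : HasInc (Set.Iic u) (k + 1) (w ++ [u]) := by
    refine ⟨s ++ [u], h1.append (List.Sublist.refl _), ?_, ?_, by simp [h4]⟩
    · simpa [List.pairwise_append, h2] using h3
    · simp only [List.mem_append, List.mem_singleton]
      rintro x (hx | rfl)
      · exact h3 x hx
      · exact Set.self_mem_Iic
  obtain ⟨t, g1, g2, g3, g4⟩ := (hw.hasInc_iff Set.ordConnected_Iic _).2 hlast
  rcases List.sublist_cons_iff.1 g1 with g | ⟨t, rfl, g⟩
  · exact Or.inr ⟨t, g, g2, g3, g4⟩
  · left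
    have := length_le_count_of_sublist (u := u) g fun x hx =>
      le_antisymm (g3 x (by simp [hx])) ((List.pairwise_cons.1 g2).1 x hx)
    simp at g4
    omega

/-- If `u` commutes with `w`, then the increasing subsequences of `w` with entries at least `u`
are not longer than the number of occurrences of `u`. -/
theorem HasInc.le_count_of_comm_Ici {u k : ℕ} {w : List ℕ} (hw : KEquiv (u :: w) (w ++ [u]))
    (h : HasInc (Set.Ici u) k w) : k ≤ w.count u := by
  refine h.le_of_step fun k ⟨s, h1, h2, h3, h4⟩ => ?_
  have hfirst : HasInc (Set.Ici u) (k + 1) (u :: w) :=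
    ⟨u :: s, h1.cons_cons u, List.pairwise_cons.2 ⟨h3, h2⟩, by simpa using h3, by simp [h4]⟩
  obtain ⟨t, g1, g2, g3, g4⟩ := (hw.hasInc_iff Set.ordConnected_Ici _).1 hfirst
  obtain ⟨t, t', rfl, g, g'⟩ := List.sublist_append_iff.1 g1
  rcases List.sublist_singleton.1 g' with rfl | rfl
  · exact Or.inr ⟨t, g, by simpa using g2, by simpa using g3, by simpa using g4⟩
  · left
    have := length_le_count_of_sublist (u := u) g fun x hx =>
      le_antisymm ((List.pairwise_append.1 g2).2.2 x hx u (by simp)) (g3 x (by simp [hx]))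
    simp at g4
    omega

/-- If `u` commutes with the row reading word of a tableau, then `u` occurs at least as often as
there are columns. -/
theorem IsTableau.length_le_count {T : List (List ℕ)} (hT : IsTableau T) {u : ℕ}
    (h : KEquiv (u :: rowWord T) (rowWord T ++ [u])) :
    (T.headD []).length ≤ (rowWord T).count u := by
  cases T with
  | nil => simp
  | cons r rs =>
    rw [rowWord_cons] at h ⊢
    simp only [List.headD_cons]
    set v := rowWord rs
    obtain ⟨A, B, rfl, hA, hB⟩ : ∃ A B, r = A ++ B ∧ (∀ x ∈ A, x ≤ u) ∧ ∀ x ∈ B, u < x := by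
      have hr := hT.1
      clear * - hr
      induction r with
      | nil => exact ⟨[], [], by simp⟩
      | cons a r ih =>
        by_cases ha : a ≤ u
        · obtain ⟨A, B, rfl, hA, hB⟩ := ih hr.of_cons
          exact ⟨a :: A, B, by simp, by simpa using ⟨ha, hA⟩, hB⟩
        · refine ⟨[], a :: r, rfl, by simp, ?_⟩
          rintro x (_ | ⟨_, hx⟩)
          · omega
          · have := (List.pairwise_cons.1 hr).1 x hx
            omega
    have hp := List.pairwise_append.1 hT.1
    have h1 : HasInc (Set.Iic u) A.length (v ++ (A ++ B)) := ⟨A, by simp, hp.1, hA, rfl⟩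
    have h2 : HasInc (Set.Ici u) ((v ++ A).count u + B.length) (v ++ (A ++ B)) := by
      refine ⟨List.replicate ((v ++ A).count u) u ++ B, ?_, ?_, ?_, by simp⟩
      · rw [← List.append_assoc]
        exact (List.replicate_sublist_iff.2 le_rfl).append (List.Sublist.refl B)
      · refine List.pairwise_append.2 ⟨List.pairwise_replicate.2 (Or.inr le_rfl), hp.2.1, ?_⟩
        intro a ha b hb
        rw [List.eq_of_mem_replicate ha]
        exact (hB b hb).le
      · simp only [List.mem_append]
        rintro x (hx | hx)
        · exact (List.eq_of_mem_replicate hx).ge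
        · exact (hB x hx).le
    have h1' := h1.le_count_of_comm_Iic h
    have h2' := h2.le_count_of_comm_Ici h
    have hB0 : B.count u = 0 := List.count_eq_zero.2 fun hu => lt_irrefl u (hB u hu)
    simp only [List.count_append, List.length_append] at h1' h2' ⊢
    omega

theorem IsTableau.comm_rowWord_iff {T : List (List ℕ)} (hT : IsTableau T) (u : ℕ) :
    KEquiv (u :: rowWord T) (rowWord T ++ [u]) ↔ ∀ j < (T.headD []).length, u ∈ col T j :=
  ⟨fun h => (hT.count_le u).2 (hT.length_le_count h), hT.rowWord_comm⟩

end Plactic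

open Plactic in
theorem stmt_4 (u : ℕ) (hu : 0 < u) (w : List ℕ) (hw : ∀ x ∈ w, 0 < x) :
    w ∈ Cent [u] ↔ ∀ j < (row w 0).length, u ∈ col (P w) j := by
  have hrow : row w 0 = (P w).headD [] := by
    rw [row]
    cases P w <;> rfl
  have e := kEquiv_rowWord_P w
  rw [hrow, ← (isTableau_P w).comm_rowWord_iff u]
  exact ⟨fun h => ((e.cons u).symm.trans h).trans (e.append_right [u]),
    fun h => ((e.cons u).trans h).trans (e.append_right [u]).symm⟩
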